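/- An ETL frame whose accessibility relation is an equivalence relation (S5) has perfect recall with respect to epistemic experience (PR_ee) if and only if it has perfect recall with respect to history consistency (PR_hc). -/

import Mathlib

attribute [local instance] Classical.propDecidable

/-- A protocol is a prefix-closed set of histories. -/
def PrefixClosed {E : Type*} (H : Set (List E)) : Prop :=
  ∀ g h : List E, g <+: h → h ∈ H → g ∈ H

/-- Perfect recall with respect to history consistency. -/
def PRhc {E : Type*} (H : Set (List E)) (sim : List E → List E → Prop) : Prop :=
  ∀ (h h' : List E) (e : E), h ∈ H → h ++ [e] ∈ H → h' ∈ H → sim (h ++ [e]) h' →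
    ∃ h'', h'' ∈ H ∧ sim h h'' ∧ h'' <+: h'

/-- Perfect recall with respect to history consistency, local version. -/
def PRhcl {E : Type*} (H : Set (List E)) (sim : List E → List E → Prop) : Prop :=
  ∀ (h h' : List E) (e : E), h ∈ H → h ++ [e] ∈ H → h' ∈ H → sim (h ++ [e]) h' →
    sim h h' ∨
    (∃ (h'' : List E) (e'' : E), h'' ∈ H ∧ sim h h'' ∧ h' = h'' ++ [e'']) ∨
    (∃ (h'' : List E) (e'' : E), h'' ∈ H ∧ sim (h ++ [e]) h'' ∧ h' = h'' ++ [e''])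

/-- The information set of a history. -/
def infoSet {E : Type*} (H : Set (List E)) (sim : List E → List E → Prop) (h : List E) :
    Set (List E) := {h' | h' ∈ H ∧ sim h h'}

/-- The epistemic experience along a history (information sets over all prefixes, in order),
with consecutive repetitions of identical sets removed (destuttered). -/
noncomputable def EEd {E : Type*} (H : Set (List E)) (sim : List E → List E → Prop)
    (h : List E) : List (Set (List E)) :=
  ((List.range (h.length + 1)).map fun n => infoSet H sim (h.take n)).destutter (· ≠ ·)

/-- Perfect recall with respect to epistemic experience: accessible histories have
equivalent epistemic experiences modulo stutterings. -/
def PRee {E : Type*} (H : Set (List E)) (sim : List E → List E → Prop) : Prop :=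
  ∀ h h' : List E, h ∈ H → h' ∈ H → sim h h' → EEd H sim h = EEd H sim h'

def TransOn {E : Type*} (H : Set (List E)) (sim : List E → List E → Prop) : Prop :=
  ∀ a b c : List E, a ∈ H → b ∈ H → c ∈ H → sim a b → sim b c → sim a c

def EuclOn {E : Type*} (H : Set (List E)) (sim : List E → List E → Prop) : Prop :=
  ∀ a b c : List E, a ∈ H → b ∈ H → c ∈ H → sim a b → sim a c → sim b c

/-- S5: the accessibility relation is an equivalence relation on the protocol. -/
def S5on {E : Type*} (H : Set (List E)) (sim : List E → List E → Prop) : Prop :=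
  (∀ h ∈ H, sim h h) ∧ (∀ h h' : List E, sim h h' → sim h' h) ∧
    (∀ a b c : List E, sim a b → sim b c → sim a c)

/-- Synchronous perfect recall. -/
def sPR {E : Type*} (H : Set (List E)) (sim : List E → List E → Prop) : Prop :=
  ∀ (h h' : List E) (e : E), h ∈ H → h ++ [e] ∈ H → h' ∈ H → sim (h ++ [e]) h' →
    ∃ (h'' : List E) (e' : E), h'' ∈ H ∧ sim h h'' ∧ h' = h'' ++ [e']

/-- Weak synchronous perfect recall. -/
def wsPR {E : Type*} (H : Set (List E)) (sim : List E → List E → Prop) : Prop :=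
  ∀ (h h' : List E) (e e' : E), h ∈ H → h' ∈ H → h ++ [e] ∈ H → h' ++ [e'] ∈ H →
    sim (h ++ [e]) (h' ++ [e']) → sim h h'

/-- The reflexive-symmetric closure (= S5 closure on introspective frames). -/
def S5cl {E : Type*} (sim : List E → List E → Prop) (h h' : List E) : Prop :=
  h = h' ∨ sim h h' ∨ sim h' h

def PersistentInsanity {E : Type*} (H : Set (List E)) (sim : List E → List E → Prop) : Prop :=
  ∀ h h' : List E, h ∈ H → h' ∈ H → infoSet H sim h = ∅ → h <+: h' → infoSet H sim h' = ∅

theorem List.destutter'_ne_append_singleton {α : Type*} (l : List α) (a b : α) :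
    (l ++ [b]).destutter' (· ≠ ·) a =
      if (a :: l).getLast (List.cons_ne_nil a l) = b then l.destutter' (· ≠ ·) a
      else l.destutter' (· ≠ ·) a ++ [b] := by
  induction l generalizing a with
  | nil => by_cases hab : a = b <;> simp [hab]
  | cons c l ih =>
    by_cases hac : a = c
    · subst hac
      simpa using ih a
    · have := ih c
      simp only [List.cons_append, List.destutter'_cons, ne_eq, hac, not_false_eq_true,
        if_true, List.getLast_cons_cons] at this ⊢
      rw [this]
      split_ifs <;> rfl

theorem List.destutter_ne_append_pair {α : Type*} (l : List α) (a b : α) :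
    (l ++ [a] ++ [b]).destutter (· ≠ ·) =
      if a = b then (l ++ [a]).destutter (· ≠ ·)
      else (l ++ [a]).destutter (· ≠ ·) ++ [b] := by
  cases l with
  | nil => simp
  | cons c l =>
    simpa [List.destutter_cons'] using List.destutter'_ne_append_singleton (l ++ [a]) c b

section EpistemicExperience

variable {E : Type*} (H : Set (List E)) (sim : List E → List E → Prop)

theorem EEd_append_singleton (g : List E) (e : E) :
    EEd H sim (g ++ [e]) =
      if infoSet H sim g = infoSet H sim (g ++ [e]) then EEd H sim g
      else EEd H sim g ++ [infoSet H sim (g ++ [e])] := by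
  have key : ∀ n ∈ List.range g.length,
      infoSet H sim ((g ++ [e]).take n) = infoSet H sim (g.take n) := by
    intro n hn
    rw [List.take_append_of_le_length (List.mem_range.mp hn).le]
  have hlast : (g ++ [e]).take (g.length + 1) = g ++ [e] := List.take_of_length_le (by simp)
  unfold EEd
  rw [List.length_append, List.length_singleton, List.range_succ, List.range_succ]
  simp only [List.map_append, List.map_singleton, List.map_congr_left key, hlast,
    List.take_left, List.take_length]
  exact List.destutter_ne_append_pair _ _ _

theorem EEd_prefix_mono {g h : List E} (hgh : g <+: h) : EEd H sim g <+: EEd H sim h := by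
  obtain ⟨t, rfl⟩ := hgh
  induction t using List.reverseRecOn with
  | nil => simp
  | append_singleton t e ih =>
    rw [← List.append_assoc, EEd_append_singleton]
    split_ifs
    · exact ih
    · exact ih.trans (List.prefix_append _ _)

theorem infoSet_mem_EEd (h : List E) : infoSet H sim h ∈ EEd H sim h := by
  induction h using List.reverseRecOn with
  | nil => simp [EEd]
  | append_singleton g e ih =>
    rw [EEd_append_singleton]
    split_ifs with hg
    · exact hg ▸ ih
    · simp

theorem exists_prefix_of_mem_EEd {h : List E} {s : Set (List E)} (hs : s ∈ EEd H sim h) :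
    ∃ g, g <+: h ∧ infoSet H sim g = s := by
  obtain ⟨n, -, rfl⟩ := List.mem_map.mp ((List.destutter_sublist _ _).subset hs)
  exact ⟨h.take n, List.take_prefix n h, rfl⟩

variable {H sim}

theorem S5on.infoSet_eq_iff (hS5 : S5on H sim) {g h : List E} (hh : h ∈ H) :
    infoSet H sim g = infoSet H sim h ↔ sim g h := by
  obtain ⟨hrefl, hsymm, htrans⟩ := hS5
  constructor
  · intro heq
    have hmem : h ∈ infoSet H sim h := ⟨hh, hrefl h hh⟩
    rw [← heq] at hmem
    exact hmem.2
  · intro hgh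
    ext k
    exact ⟨fun hk => ⟨hk.1, htrans _ _ _ (hsymm _ _ hgh) hk.2⟩,
      fun hk => ⟨hk.1, htrans _ _ _ hgh hk.2⟩⟩

theorem PRee.prhc (hH : PrefixClosed H) (hS5 : S5on H sim) (hee : PRee H sim) :
    PRhc H sim := by
  intro h h' e _ hhe hh' hsim
  have hmem : infoSet H sim h ∈ EEd H sim h' := by
    rw [← hee _ _ hhe hh' hsim]
    exact (EEd_prefix_mono H sim (List.prefix_append h [e])).subset (infoSet_mem_EEd H sim h)
  obtain ⟨g, hg, heq⟩ := exists_prefix_of_mem_EEd H sim hmem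
  have hgH := hH g h' hg hh'
  exact ⟨g, hgH, (hS5.infoSet_eq_iff hgH).mp heq.symm, hg⟩

/-- If `g` is distinguishable from `g ++ [e]`, then every history indistinguishable from
`g ++ [e]` has a proper prefix indistinguishable from `g`. -/
theorem PRhc.exists_proper_prefix_sim (hS5 : S5on H sim) (hhc : PRhc H sim) {g h' : List E} {e : E}
    (hg : g ∈ H) (hge : g ++ [e] ∈ H) (hh' : h' ∈ H) (hsim : sim (g ++ [e]) h')
    (hne : ¬ sim g (g ++ [e])) : ∃ k ∈ H, sim g k ∧ k <+: h' ∧ k ≠ h' := by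
  obtain ⟨k, hkH, hgk, hk⟩ := hhc g h' e hg hge hh' hsim
  refine ⟨k, hkH, hgk, hk, ?_⟩
  rintro rfl
  exact hne (hS5.2.2 _ _ _ hgk (hS5.2.1 _ _ hsim))

theorem PRhc.pree (hH : PrefixClosed H) (hS5 : S5on H sim) (hhc : PRhc H sim) :
    PRee H sim := by
  intro h h' hh hh' hsim
  induction hn : h.length + h'.length using Nat.strong_induction_on generalizing h h' with
  | _ n ih =>
  have hsymm := hS5.2.1 _ _ hsim
  rcases List.eq_nil_or_concat' h with rfl | ⟨g, e, rfl⟩ <;>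
    rcases List.eq_nil_or_concat' h' with rfl | ⟨g', e', rfl⟩
  · rfl
  · have hg' := hH _ _ (List.prefix_append g' [e']) hh'
    by_cases hs' : sim g' (g' ++ [e'])
    · rw [EEd_append_singleton, if_pos ((hS5.infoSet_eq_iff hh').mpr hs')]
      exact ih _ (by simp [← hn]) _ _ hh hg' (hS5.2.2 _ _ _ hsim (hS5.2.1 _ _ hs')) rfl
    · obtain ⟨k, -, -, hk, hkne⟩ := hhc.exists_proper_prefix_sim hS5 hg' hh' hh hsymm hs'
      exact absurd (List.prefix_nil.mp hk) hkne
  · have hg := hH _ _ (List.prefix_append g [e]) hh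
    by_cases hs : sim g (g ++ [e])
    · rw [EEd_append_singleton, if_pos ((hS5.infoSet_eq_iff hh).mpr hs)]
      exact ih _ (by simp [← hn]) _ _ hg hh' (hS5.2.2 _ _ _ hs hsim) rfl
    · obtain ⟨k, -, -, hk, hkne⟩ := hhc.exists_proper_prefix_sim hS5 hg hh hh' hsim hs
      exact absurd (List.prefix_nil.mp hk) hkne
  · have hg := hH _ _ (List.prefix_append g [e]) hh
    have hg' := hH _ _ (List.prefix_append g' [e']) hh'
    simp only [List.length_append, List.length_singleton] at hn
    by_cases hs : sim g (g ++ [e])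
    · rw [EEd_append_singleton H sim g, if_pos ((hS5.infoSet_eq_iff hh).mpr hs)]
      exact ih _ (by simp; omega) _ _ hg hh' (hS5.2.2 _ _ _ hs hsim) rfl
    by_cases hs' : sim g' (g' ++ [e'])
    · rw [EEd_append_singleton H sim g', if_pos ((hS5.infoSet_eq_iff hh').mpr hs')]
      exact ih _ (by simp; omega) _ _ hh hg' (hS5.2.2 _ _ _ hsim (hS5.2.1 _ _ hs')) rfl
    obtain ⟨k', hk'H, hgk', hk', hk'ne⟩ := hhc.exists_proper_prefix_sim hS5 hg hh hh' hsim hs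
    obtain ⟨k, hkH, hgk, hk, hkne⟩ := hhc.exists_proper_prefix_sim hS5 hg' hh' hh hsymm hs'
    replace hk' := (List.prefix_concat_iff.mp hk').resolve_left hk'ne
    replace hk := (List.prefix_concat_iff.mp hk).resolve_left hkne
    have hle' := hk'.length_le
    have hle := hk.length_le
    have h₁ : EEd H sim g <+: EEd H sim g' := by
      rw [ih _ (by omega) _ _ hg hk'H hgk' rfl]
      exact EEd_prefix_mono H sim hk'
    have h₂ : EEd H sim g' <+: EEd H sim g := by
      rw [ih _ (by omega) _ _ hg' hkH hgk rfl]
      exact EEd_prefix_mono H sim hk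
    have heq : EEd H sim g = EEd H sim g' :=
      h₁.eq_of_length (le_antisymm h₁.length_le h₂.length_le)
    rw [EEd_append_singleton H sim g, EEd_append_singleton H sim g',
      if_neg (mt (hS5.infoSet_eq_iff hh).mp hs), if_neg (mt (hS5.infoSet_eq_iff hh').mp hs'),
      heq, (hS5.infoSet_eq_iff hh').mpr hsim]

end EpistemicExperience

/-- On S5 ETL frames, PR_ee and PR_hc are equivalent. -/
theorem s5_pree_iff_prhc {E : Type*} [Fintype E] (H : Set (List E))
    (sim : List E → List E → Prop) (hH : PrefixClosed H) (hS5 : S5on H sim) :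
    PRee H sim ↔ PRhc H sim :=
  ⟨fun h => h.prhc hH hS5, fun h => h.pree hH hS5⟩
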